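/- arXiv:1609.05890 — 2 statements merged into one kernel-verified Lean document; each statement's English description precedes it below -/
import Mathlib

section
/- There exist matrices A and A′ in C_2, each of rank 2, such that the face of C_2 generated by A has dimension 0 (i.e., A is an extreme point of C_2) and the face of C_2 generated by A′ has dimension 2. -/
open Matrix
open scoped ComplexOrder

noncomputable section

/-- `Cset n` is the set of n²×n² complex positive semidefinite matrices, written in block
form with blocks indexed by pairs `(i,k)` (block row `i`, inner row `k`), whose `(i,j)`
blocks have trace `δ_{ij}`.  It corresponds to the set of quantum channels via the Choi
matrix. -/
def Cset (n : ℕ) : Set (Matrix (Fin n × Fin n) (Fin n × Fin n) ℂ) :=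
  {A | A.PosSemidef ∧
    ∀ i j : Fin n, ∑ k : Fin n, A (i, k) (j, k) = if i = j then 1 else 0}

/-- `F` is a face of the convex set `C`: a convex subset such that whenever a point of `F`
lies in the open segment between two points of `C`, both endpoints lie in `F`. -/
def IsFace {V : Type*} [AddCommGroup V] [Module ℝ V] (C F : Set V) : Prop :=
  F ⊆ C ∧ Convex ℝ F ∧
    ∀ x ∈ C, ∀ y ∈ C, ∀ t : ℝ, 0 < t → t < 1 → t • x + (1 - t) • y ∈ F → x ∈ F ∧ y ∈ F

/-- The face of `C` generated by `A`: the smallest face of `C` containing `A`. -/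
def faceGen {V : Type*} [AddCommGroup V] [Module ℝ V] (C : Set V) (A : V) : Set V :=
  ⋂₀ {F : Set V | IsFace C F ∧ A ∈ F}

/-- The dimension of a face: the dimension of its affine hull as a real affine subspace. -/
def faceDim {V : Type*} [AddCommGroup V] [Module ℝ V] (F : Set V) : ℕ :=
  Module.finrank ℝ ↥(vectorSpan ℝ F)

/-!
For `f : Fin n → Fin n`, let `A` be the diagonal 0-1 matrix supported on the graph
`{(i, f i)}`. The vanishing of the other diagonal entries cuts out a face of `Cset n`, whose
elements are the `n × n` correlation matrices `M` (spread over the graph) with `M i j = 0`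
whenever `i ≠ j` and `f i = f j`. The generator `A` corresponds to `M = 1`, around which one can
move in every Hermitian direction `H` with `H i j = 0` whenever `f i = f j`. Hence the face
generated by `A` has dimension `#{(i, j) | f i ≠ f j}`; for `n = 2` this is `0` if `f` is constant
and `2` if `f` is the identity.
-/

section Face

variable {V : Type*} [AddCommGroup V] [Module ℝ V] {C F : Set V} {A H : V}

theorem self_mem_faceGen : A ∈ faceGen C A := fun _ hF => hF.2

theorem faceGen_subset (hF : IsFace C F) (hA : A ∈ F) : faceGen C A ⊆ F :=
  Set.sInter_subset_of_mem ⟨hF, hA⟩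

theorem add_mem_faceGen (hadd : A + H ∈ C) (hsub : A - H ∈ C) : A + H ∈ faceGen C A := by
  rintro F ⟨hF, hA⟩
  have midpoint : (1 / 2 : ℝ) • (A + H) + (1 - 1 / 2 : ℝ) • (A - H) = A := by module
  exact (hF.2.2 _ hadd _ hsub (1 / 2) (by norm_num) (by norm_num) (midpoint.symm ▸ hA)).1

theorem vectorSpan_faceGen_eq {W : Submodule ℝ V} (hF : IsFace C F) (hA : A ∈ F)
    (hFW : ∀ B ∈ F, B - A ∈ W)
    (hWC : ∀ H ∈ W, ∃ ε : ℝ, 0 < ε ∧ A + ε • H ∈ C ∧ A - ε • H ∈ C) :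
    vectorSpan ℝ (faceGen C A) = W := by
  apply le_antisymm
  · rw [vectorSpan_eq_span_vsub_set_right ℝ self_mem_faceGen, Submodule.span_le]
    rintro _ ⟨B, hB, rfl⟩
    exact hFW B (faceGen_subset hF hA hB)
  · intro H hH
    obtain ⟨ε, hε, hadd, hsub⟩ := hWC H hH
    have hεH : ε • H ∈ vectorSpan ℝ (faceGen C A) := by
      simpa using vsub_mem_vectorSpan ℝ (add_mem_faceGen hadd hsub) self_mem_faceGen
    exact (Submodule.smul_mem_iff _ hε.ne').mp hεH

theorem isFace_setOf_forall_eq_zero {ι E : Type*} [AddCommGroup E] [PartialOrder E]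
    [IsOrderedAddMonoid E] [Module ℝ E] [PosSMulMono ℝ E] (hC : Convex ℝ C)
    (φ : ι → V →ₗ[ℝ] E) (hφ : ∀ a, ∀ x ∈ C, 0 ≤ φ a x) :
    IsFace C {x | x ∈ C ∧ ∀ a, φ a x = 0} := by
  refine ⟨fun x hx => hx.1, ?_, ?_⟩
  · intro x hx y hy a b ha hb hab
    exact ⟨hC hx.1 hy.1 ha hb hab, fun i => by simp [hx.2 i, hy.2 i]⟩
  · intro x hx y hy t ht ht1 hxy
    have ht1' : 0 < 1 - t := sub_pos.mpr ht1
    have summands_eq_zero (a : ι) : t • φ a x = 0 ∧ (1 - t) • φ a y = 0 := by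
      rw [← add_eq_zero_iff_of_nonneg (smul_nonneg ht.le (hφ a x hx))
        (smul_nonneg ht1'.le (hφ a y hy))]
      simpa using hxy.2 a
    exact ⟨⟨hx, fun a => (smul_eq_zero_iff_right ht.ne').mp (summands_eq_zero a).1⟩,
      ⟨hy, fun a => (smul_eq_zero_iff_right ht1'.ne').mp (summands_eq_zero a).2⟩⟩

end Face

section PosSemidef

variable {ι : Type*} [Finite ι]

theorem posSemidef_apply_eq_zero_of_diag_eq_zero {𝕜 : Type*} [RCLike 𝕜]
    {A : Matrix ι ι 𝕜} (hA : A.PosSemidef) {q : ι} (hq : A q q = 0) (p : ι) : A p q = 0 := by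
  classical
  cases nonempty_fintype ι
  have mulVec_single : A *ᵥ Pi.single q 1 = 0 :=
    (hA.dotProduct_mulVec_zero_iff _).mp (by simp [hq])
  simpa using congrFun mulVec_single p

open scoped Matrix.Norms.L2Operator MatrixOrder in
theorem exists_pos_posSemidef_one_add_smul [DecidableEq ι] {H : Matrix ι ι ℂ}
    (hH : H.IsHermitian) :
    ∃ ε : ℝ, 0 < ε ∧ (1 + ε • H).PosSemidef ∧ (1 - ε • H).PosSemidef := by
  cases nonempty_fintype ι
  have hε : 0 < (‖H‖ + 1)⁻¹ := by positivity
  have norm_smul_le : ‖(‖H‖ + 1)⁻¹ • H‖ ≤ 1 := by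
    rw [norm_smul, Real.norm_of_nonneg hε.le, inv_mul_le_one₀ (by positivity)]
    linarith
  have hεH : IsSelfAdjoint ((‖H‖ + 1)⁻¹ • H) := hH.smul (IsSelfAdjoint.all _)
  have norm_le_one : algebraMap ℝ (Matrix ι ι ℂ) ‖(‖H‖ + 1)⁻¹ • H‖ ≤ 1 := by
    simpa using algebraMap_mono (Matrix ι ι ℂ) norm_smul_le
  refine ⟨(‖H‖ + 1)⁻¹, hε, ?_, ?_⟩
  · rw [← nonneg_iff_posSemidef, ← neg_le_iff_add_nonneg']
    exact (neg_le_neg norm_le_one).trans hεH.neg_algebraMap_norm_le_self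
  · rw [← nonneg_iff_posSemidef, sub_nonneg]
    exact hεH.le_algebraMap_norm_self.trans norm_le_one

end PosSemidef

section HermitianOffKernel

variable {ι κ : Type*} (f : ι → κ)

/-- The real vector space of Hermitian matrices whose `(i, j)` entry vanishes whenever
`f i = f j`: the directions in which the identity matrix can be moved inside the correlation
matrices subject to that vanishing condition off the diagonal. -/
def hermitianOffKernel : Submodule ℝ (Matrix ι ι ℂ) where
  carrier := {H | H.IsHermitian ∧ ∀ i j, f i = f j → H i j = 0}
  zero_mem' := ⟨isHermitian_zero, fun _ _ _ => rfl⟩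
  add_mem' hG hH := ⟨hG.1.add hH.1, fun i j hij => by simp [hG.2 i j hij, hH.2 i j hij]⟩
  smul_mem' r H hH := ⟨hH.1.smul (IsSelfAdjoint.all r), fun i j hij => by simp [hH.2 i j hij]⟩

/-- Real coordinates on `hermitianOffKernel f`. A Hermitian matrix is recovered from the sum of its
real and imaginary parts, since these are the symmetric and the skew-symmetric part of that sum. -/
def hermitianOffKernelEquiv [DecidableEq κ] :
    hermitianOffKernel f ≃ₗ[ℝ] ({p : ι × ι // f p.1 ≠ f p.2} → ℝ) where
  toFun H p := (H.1 p.1.1 p.1.2).re + (H.1 p.1.1 p.1.2).im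
  invFun r :=
    let N (i j : ι) : ℝ := if hij : f i ≠ f j then r ⟨(i, j), hij⟩ else 0
    ⟨of fun i j => ⟨(N i j + N j i) / 2, (N i j - N j i) / 2⟩,
      IsHermitian.ext fun i j => Complex.ext (by simp [add_comm]) (by simp [← neg_div]),
      fun i j hij => by simp [N, hij, Complex.ext_iff]⟩
  map_add' G H := by
    ext
    simp [add_add_add_comm]
  map_smul' r H := by
    ext
    simp [mul_add]
  left_inv H := by
    ext i j
    have hji : H.1 j i = star (H.1 i j) := (H.2.1.apply j i).symm
    by_cases hij : f i = f j
    · simp [hij, H.2.2 i j hij, Complex.ext_iff]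
    · apply Complex.ext <;> simp [hij, Ne.symm hij, hji, add_add_add_comm, ← two_mul]
  right_inv r := by
    ext p
    simp [p.2, p.2.symm, ← add_div, ← two_mul]

theorem finrank_hermitianOffKernel [Fintype ι] [DecidableEq κ] :
    Module.finrank ℝ (hermitianOffKernel f) =
      Fintype.card {p : ι × ι // f p.1 ≠ f p.2} := by
  rw [(hermitianOffKernelEquiv f).finrank_eq, Module.finrank_fintype_fun_eq_card]

end HermitianOffKernel

section GraphLift

variable {ι κ : Type*} [DecidableEq κ] (f : ι → κ)

/-- The matrix `M` spread over the graph of `f`: it has the entry `M i j` at position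
`((i, f i), (j, f j))` and vanishes elsewhere. It is `E * M * Eᴴ` for the isometry
`E` sending the basis vector `e i` to `e i ⊗ e (f i)`. -/
def graphLift : Matrix ι ι ℂ →ₗ[ℝ] Matrix (ι × κ) (ι × κ) ℂ where
  toFun M := of fun p q => if f p.1 = p.2 ∧ f q.1 = q.2 then M p.1 q.1 else 0
  map_add' M N := by
    ext
    simp [← ite_add_zero]
  map_smul' r M := by
    ext
    simp

theorem graphLift_apply (M : Matrix ι ι ℂ) (p q : ι × κ) :
    graphLift f M p q = if f p.1 = p.2 ∧ f q.1 = q.2 then M p.1 q.1 else 0 := rfl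

theorem graphLift_injective : Function.Injective (graphLift f) := fun M N hMN => by
  ext i j
  simpa [graphLift_apply] using congrFun₂ hMN (i, f i) (j, f j)

theorem graphLift_one [DecidableEq ι] :
    graphLift f 1 = diagonal fun p : ι × κ => if f p.1 = p.2 then 1 else 0 := by
  ext ⟨i, k⟩ ⟨j, l⟩
  simp only [graphLift_apply, diagonal_apply, one_apply]
  grind

variable {f}

theorem graphLift_submatrix_eq {B : Matrix (ι × κ) (ι × κ) ℂ}
    (hB : ∀ p q, ¬(f p.1 = p.2 ∧ f q.1 = q.2) → B p q = 0) :
    graphLift f (B.submatrix (fun i => (i, f i)) fun i => (i, f i)) = B := by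
  ext ⟨i, k⟩ ⟨j, l⟩
  grind [graphLift_apply, submatrix_apply]

theorem sum_graphLift_apply [Fintype κ] (M : Matrix ι ι ℂ) (i j : ι) :
    ∑ k, graphLift f M (i, k) (j, k) = if f i = f j then M i j else 0 := by
  simp only [graphLift_apply, ite_and, Finset.sum_ite_eq, Finset.mem_univ, if_true,
    eq_comm (a := f j)]

theorem posSemidef_graphLift [Finite ι] [Finite κ] {M : Matrix ι ι ℂ} (hM : M.PosSemidef) :
    (graphLift f M).PosSemidef := by
  classical
  cases nonempty_fintype ι
  cases nonempty_fintype κ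
  let D : Matrix (ι × κ) (ι × κ) ℂ := diagonal fun p => if f p.1 = p.2 then 1 else 0
  have compression : graphLift f M = Dᴴ * M.submatrix Prod.fst Prod.fst * D := by
    ext p q
    simp [D, graphLift_apply, diagonal_conjTranspose, ← ite_and, and_comm]
  rw [compression]
  exact (hM.submatrix Prod.fst).conjTranspose_mul_mul_same D

theorem rank_graphLift_one [Fintype ι] [Fintype κ] [DecidableEq ι] :
    (graphLift f 1).rank = Fintype.card ι := by
  classical
  rw [graphLift_one, rank_diagonal]
  refine Fintype.card_congr
    ⟨fun p => p.1.1, fun i => ⟨(i, f i), by simp⟩, fun ⟨⟨i, k⟩, hk⟩ => ?_, fun i => rfl⟩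
  simpa using hk

end GraphLift

section Cset

variable {n : ℕ} {f : Fin n → Fin n}

theorem convex_Cset : Convex ℝ (Cset n) := by
  intro A hA B hB a b ha hb hab
  refine ⟨(hA.1.smul ha).add (hB.1.smul hb), fun i j => ?_⟩
  simp only [Matrix.add_apply, Matrix.smul_apply, Finset.sum_add_distrib, ← Finset.smul_sum,
    hA.2 i j, hB.2 i j, ← add_smul, hab, one_smul]

theorem graphLift_mem_Cset {M : Matrix (Fin n) (Fin n) ℂ} (hM : M.PosSemidef)
    (hfM : ∀ i j, f i = f j → M i j = if i = j then 1 else 0) : graphLift f M ∈ Cset n := by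
  refine ⟨posSemidef_graphLift hM, fun i j => ?_⟩
  rw [sum_graphLift_apply]
  grind

theorem graphLift_one_mem_Cset : graphLift f 1 ∈ Cset n :=
  graphLift_mem_Cset PosSemidef.one fun _ _ _ => one_apply

variable (f) in
/-- The elements of `Cset n` supported on the graph of `f`. Only the vanishing of the diagonal
entries off the graph is required: the other entries off the graph then vanish by positivity. -/
def graphFace : Set (Matrix (Fin n × Fin n) (Fin n × Fin n) ℂ) :=
  {B | B ∈ Cset n ∧ ∀ p : {p : Fin n × Fin n // f p.1 ≠ p.2}, B p p = 0}

theorem isFace_graphFace : IsFace (Cset n) (graphFace f) :=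
  isFace_setOf_forall_eq_zero convex_Cset
    (fun p : {p : Fin n × Fin n // f p.1 ≠ p.2} => entryLinearMap ℝ ℂ p.1 p.1)
    fun _ _ hB => hB.1.diag_nonneg

theorem graphLift_one_mem_graphFace : graphLift f 1 ∈ graphFace f :=
  ⟨graphLift_one_mem_Cset, fun p => by simp [graphLift_apply, p.2]⟩

theorem graphLift_submatrix_eq_of_mem_graphFace {B : Matrix (Fin n × Fin n) (Fin n × Fin n) ℂ}
    (hB : B ∈ graphFace f) :
    graphLift f (B.submatrix (fun i => (i, f i)) fun i => (i, f i)) = B := by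
  refine graphLift_submatrix_eq fun p q hpq => ?_
  by_cases hq : f q.1 = q.2
  · have hp : f p.1 ≠ p.2 := fun hp => hpq ⟨hp, hq⟩
    rw [← hB.1.1.1.apply, posSemidef_apply_eq_zero_of_diag_eq_zero hB.1.1 (hB.2 ⟨p, hp⟩),
      star_zero]
  · exact posSemidef_apply_eq_zero_of_diag_eq_zero hB.1.1 (hB.2 ⟨q, hq⟩) p

theorem sub_graphLift_one_mem_map_hermitianOffKernel
    {B : Matrix (Fin n × Fin n) (Fin n × Fin n) ℂ} (hB : B ∈ graphFace f) :
    B - graphLift f 1 ∈ (hermitianOffKernel f).map (graphLift f) := by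
  set M := B.submatrix (fun i => (i, f i)) fun i => (i, f i)
  have lift_M : graphLift f M = B := graphLift_submatrix_eq_of_mem_graphFace hB
  refine ⟨M - 1, ⟨(hB.1.1.1.submatrix _).sub isHermitian_one, fun i j hij => ?_⟩, by
    rw [map_sub, lift_M]⟩
  have trace_block := hB.1.2 i j
  rw [← lift_M, sum_graphLift_apply, if_pos hij] at trace_block
  rw [Matrix.sub_apply, trace_block, one_apply, sub_self]

theorem exists_pos_graphLift_one_add_smul_mem_Cset {H : Matrix (Fin n) (Fin n) ℂ}
    (hH : H ∈ hermitianOffKernel f) :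
    ∃ ε : ℝ, 0 < ε ∧ graphLift f 1 + ε • graphLift f H ∈ Cset n ∧
      graphLift f 1 - ε • graphLift f H ∈ Cset n := by
  obtain ⟨ε, hε, hadd, hsub⟩ := exists_pos_posSemidef_one_add_smul hH.1
  simp only [← map_smul, ← map_add, ← map_sub]
  exact ⟨ε, hε, graphLift_mem_Cset hadd fun i j hij => by simp [hH.2 i j hij, one_apply],
    graphLift_mem_Cset hsub fun i j hij => by simp [hH.2 i j hij, one_apply]⟩

theorem vectorSpan_faceGen_graphLift_one :
    vectorSpan ℝ (faceGen (Cset n) (graphLift f 1)) =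
      (hermitianOffKernel f).map (graphLift f) := by
  refine vectorSpan_faceGen_eq isFace_graphFace graphLift_one_mem_graphFace
    (fun _ => sub_graphLift_one_mem_map_hermitianOffKernel) ?_
  rintro _ ⟨H, hH, rfl⟩
  exact exists_pos_graphLift_one_add_smul_mem_Cset hH

theorem faceDim_faceGen_graphLift_one :
    faceDim (faceGen (Cset n) (graphLift f 1)) =
      Fintype.card {p : Fin n × Fin n // f p.1 ≠ f p.2} := by
  rw [faceDim, vectorSpan_faceGen_graphLift_one, ← finrank_hermitianOffKernel]
  exact (Submodule.equivMapOfInjective _ (graphLift_injective f) _).finrank_eq.symm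

end Cset

theorem exists_rank_two_faces_n_eq_two_general {n : ℕ} (f : Fin n → Fin n) :
    ∃ A ∈ Cset n, A.rank = n ∧
      faceDim (faceGen (Cset n) A) = Fintype.card {p : Fin n × Fin n // f p.1 ≠ f p.2} :=
  ⟨graphLift f 1, graphLift_one_mem_Cset, rank_graphLift_one.trans (Fintype.card_fin n),
    faceDim_faceGen_graphLift_one⟩

/-- There exist rank-2 matrices in `C_2` generating faces of dimension 0 and 2,
respectively. -/
theorem exists_rank_two_faces_n_eq_two :
    ∃ A A' : Matrix (Fin 2 × Fin 2) (Fin 2 × Fin 2) ℂ,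
      A ∈ Cset 2 ∧ A' ∈ Cset 2 ∧ A.rank = 2 ∧ A'.rank = 2 ∧
      faceDim (faceGen (Cset 2) A) = 0 ∧ faceDim (faceGen (Cset 2) A') = 2 := by
  obtain ⟨A, hA, rank_A, dim_A⟩ := exists_rank_two_faces_n_eq_two_general fun _ : Fin 2 => 0
  obtain ⟨A', hA', rank_A', dim_A'⟩ := exists_rank_two_faces_n_eq_two_general (id : Fin 2 → Fin 2)
  exact ⟨A, A', hA, hA', rank_A, rank_A', dim_A.trans (by simp), dim_A'.trans (by decide)⟩
end
end

section
/- The affine hull of C_n (the smallest affine subspace of the real vector space of n²×n² complex Hermitian matrices containing C_n) equals W_n = { A = [A_{ij}]_{i,j=1}^n Hermitian of order n² with n×n blocks A_{ij} : tr(A_{ij}) = δ_{ij} for all i,j ∈ {1,…,n} }; in particular, the affine hull of C_n has real dimension n⁴ − n². -/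
open Matrix
open scoped ComplexOrder

noncomputable section

/-!
A strictly positive element `d` of a C⋆-algebra dominates a positive multiple of `1`, so it can be
moved a little in every self-adjoint direction without losing positivity. Hence a slice
`{a ≥ 0 | L a = L d}` of the positive cone spans the whole affine space
`{a self-adjoint | L a = L d}`. Prescribing a positive definite value `T` for the partial trace over
a `k`-dimensional factor cuts out such a slice, with `T ⊗ (1 / k)` as a positive definite point;
the block trace conditions are the case `T = 1`. The partial trace is onto and commutes with `star`,
so it maps Hermitian matrices onto Hermitian matrices and rank-nullity gives the dimension.
-/

theorem le_vectorSpan_of_forall_exists_add_smul_mem {k V : Type*} [DivisionRing k]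
    [AddCommGroup V] [Module k V] {S : Set V} {W : Submodule k V} {d : V} (hd : d ∈ S)
    (h : ∀ v ∈ W, ∃ ε : k, ε ≠ 0 ∧ d + ε • v ∈ S) : W ≤ vectorSpan k S := by
  intro v hv
  obtain ⟨ε, hε, hmem⟩ := h v hv
  have hsmul : ε • v ∈ vectorSpan k S := by
    simpa using vsub_mem_vectorSpan k hmem hd
  exact (Submodule.smul_mem_iff _ hε).1 hsmul

section CStarAlgebra

variable {A : Type*} [CStarAlgebra A] [PartialOrder A] [StarOrderedRing A]

theorem exists_pos_algebraMap_le_of_isStrictlyPositive {d : A} (hd : IsStrictlyPositive d) :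
    ∃ r : ℝ, 0 < r ∧ algebraMap ℝ A r ≤ d := by
  cases subsingleton_or_nontrivial A
  · exact ⟨1, one_pos, (Subsingleton.elim _ _).le⟩
  · exact (CFC.exists_pos_algebraMap_le_iff hd.isSelfAdjoint).2 fun _ hx ↦ hd.spectrum_pos hx

theorem exists_pos_nonneg_add_smul {d h : A} (hd : IsStrictlyPositive d) (hh : IsSelfAdjoint h) :
    ∃ ε : ℝ, 0 < ε ∧ 0 ≤ d + ε • h := by
  obtain ⟨r, hr, hrd⟩ := exists_pos_algebraMap_le_of_isStrictlyPositive hd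
  have hnorm : 0 < ‖h‖ + 1 := by positivity
  refine ⟨r / (‖h‖ + 1), div_pos hr hnorm, ?_⟩
  have hbound : -algebraMap ℝ A (‖h‖ + 1) ≤ h :=
    (neg_le_neg (algebraMap_mono A (le_add_of_nonneg_right zero_le_one))).trans
      hh.neg_algebraMap_norm_le_self
  calc (0 : A) = algebraMap ℝ A r + (r / (‖h‖ + 1)) • -algebraMap ℝ A (‖h‖ + 1) := by
        rw [smul_neg, Algebra.smul_def, ← map_mul, div_mul_cancel₀ r hnorm.ne', add_neg_cancel]
    _ ≤ d + (r / (‖h‖ + 1)) • h := by gcongr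

variable {V : Type*} [AddCommGroup V] [Module ℝ V]

theorem vectorSpan_setOf_nonneg_and_map_eq (L : A →ₗ[ℝ] V) {d : A} (hd : IsStrictlyPositive d) :
    vectorSpan ℝ {a : A | 0 ≤ a ∧ L a = L d} = selfAdjoint.submodule ℝ A ⊓ LinearMap.ker L := by
  apply le_antisymm
  · rw [vectorSpan_def, Submodule.span_le]
    rintro _ ⟨a, ⟨ha, hLa⟩, b, ⟨hb, hLb⟩, rfl⟩
    exact ⟨ha.isSelfAdjoint.sub hb.isSelfAdjoint, by simp [hLa, hLb]⟩
  · refine le_vectorSpan_of_forall_exists_add_smul_mem ⟨hd.nonneg, rfl⟩ ?_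
    rintro h ⟨hh, hLh : L h = 0⟩
    obtain ⟨ε, hε, hnonneg⟩ := exists_pos_nonneg_add_smul hd hh
    exact ⟨ε, hε.ne', hnonneg, by simp [hLh]⟩

theorem coe_affineSpan_setOf_nonneg_and_map_eq (L : A →ₗ[ℝ] V) {d : A}
    (hd : IsStrictlyPositive d) :
    (affineSpan ℝ {a : A | 0 ≤ a ∧ L a = L d} : Set A) = {a | IsSelfAdjoint a ∧ L a = L d} := by
  ext a
  have hmem : d ∈ {a : A | 0 ≤ a ∧ L a = L d} := ⟨hd.nonneg, rfl⟩
  have hself : IsSelfAdjoint (a - d) ↔ IsSelfAdjoint a :=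
    ⟨fun h ↦ by simpa using h.add hd.isSelfAdjoint, fun h ↦ h.sub hd.isSelfAdjoint⟩
  rw [SetLike.mem_coe, ← AffineSubspace.vsub_right_mem_direction_iff_mem (mem_affineSpan ℝ hmem),
    direction_affineSpan, vectorSpan_setOf_nonneg_and_map_eq L hd, Submodule.mem_inf,
    LinearMap.mem_ker, vsub_eq_sub, map_sub, sub_eq_zero]
  exact and_congr_left' hself

end CStarAlgebra

section SelfAdjoint

theorem map_selfAdjoint_submodule_of_surjective {R A B : Type*} [Semiring R] [StarMul R]
    [TrivialStar R] [Invertible (2 : R)]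
    [AddCommGroup A] [Module R A] [StarAddMonoid A] [StarModule R A]
    [AddCommGroup B] [Module R B] [StarAddMonoid B] [StarModule R B]
    {φ : A →ₗ[R] B} (hstar : ∀ a, φ (star a) = star (φ a)) (hφ : Function.Surjective φ) :
    (selfAdjoint.submodule R A).map φ = selfAdjoint.submodule R B := by
  apply le_antisymm
  · rintro _ ⟨a, ha : star a = a, rfl⟩
    exact (hstar a).symm.trans (congrArg φ ha)
  · intro b hb
    obtain ⟨a, rfl⟩ := hφ b
    refine ⟨selfAdjointPart R a, (selfAdjointPart R a).2, ?_⟩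
    rw [← IsSelfAdjoint.coe_selfAdjointPart_apply R hb]
    simp [hstar]

variable {A B : Type*}
  [AddCommGroup A] [Module ℂ A] [StarAddMonoid A] [StarModule ℂ A] [FiniteDimensional ℂ A]
  [AddCommGroup B] [Module ℂ B] [StarAddMonoid B] [StarModule ℂ B]

variable (A) in
theorem finrank_selfAdjoint_submodule :
    Module.finrank ℝ (selfAdjoint.submodule ℝ A) = Module.finrank ℂ A := by
  have : FiniteDimensional ℝ A := FiniteDimensional.complexToReal A
  have hrank := (imaginaryPart (A := A)).finrank_range_add_finrank_ker
  rw [LinearMap.range_eq_top.2 imaginaryPart_surjective, finrank_top, ker_imaginaryPart,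
    finrank_real_of_complex] at hrank
  -- `imaginaryPart` lands in the `AddSubgroup` with the same carrier as the submodule.
  change Module.finrank ℝ (selfAdjoint.submodule ℝ A) + _ = _ at hrank
  lia

theorem finrank_selfAdjoint_submodule_inf_ker {φ : A →ₗ[ℝ] B}
    (hstar : ∀ a, φ (star a) = star (φ a)) (hφ : Function.Surjective φ) :
    Module.finrank ℝ ↥(selfAdjoint.submodule ℝ A ⊓ LinearMap.ker φ) =
      Module.finrank ℂ A - Module.finrank ℂ B := by
  have : FiniteDimensional ℝ A := FiniteDimensional.complexToReal A
  have : FiniteDimensional ℝ B := Module.Finite.of_surjective φ hφ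
  have : FiniteDimensional ℂ B := Module.Finite.of_restrictScalars_finite ℝ ℂ B
  have hrank := (φ.domRestrict (selfAdjoint.submodule ℝ A)).finrank_range_add_finrank_ker
  rw [LinearMap.range_domRestrict, LinearMap.ker_domRestrict,
    map_selfAdjoint_submodule_of_surjective hstar hφ, finrank_selfAdjoint_submodule,
    finrank_selfAdjoint_submodule, ← Submodule.finrank_map_subtype_eq,
    Submodule.map_comap_subtype] at hrank
  exact Nat.eq_sub_of_add_eq' hrank

end SelfAdjoint

section PartialTrace

open scoped Kronecker

variable {ι κ : Type*} [Fintype κ]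

/-- The partial trace over the second tensor factor: the matrix of traces of the `κ × κ` blocks of
a matrix indexed by `ι × κ`. Like `Matrix.traceLinearMap`, it allows scalars `R` different from the
entries `α`. -/
def partialTrace (R : Type*) {α : Type*} [Semiring R] [AddCommMonoid α] [Module R α] :
    Matrix (ι × κ) (ι × κ) α →ₗ[R] Matrix ι ι α where
  toFun A := of fun i j ↦ ∑ k, A (i, k) (j, k)
  map_add' A B := by ext; simp [Finset.sum_add_distrib]
  map_smul' r A := by ext; simp [Finset.smul_sum]

theorem partialTrace_apply (R : Type*) {α : Type*} [Semiring R] [AddCommMonoid α] [Module R α]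
    (A : Matrix (ι × κ) (ι × κ) α) (i j : ι) :
    partialTrace R A i j = ∑ k, A (i, k) (j, k) :=
  rfl

theorem partialTrace_eq_one_iff [DecidableEq ι] (R : Type*) {α : Type*} [Semiring R]
    [AddCommMonoidWithOne α] [Module R α] {A : Matrix (ι × κ) (ι × κ) α} :
    partialTrace R A = 1 ↔ ∀ i j, ∑ k, A (i, k) (j, k) = if i = j then 1 else 0 := by
  simp only [← Matrix.ext_iff, partialTrace_apply, one_apply]

theorem partialTrace_conjTranspose (R : Type*) {α : Type*} [Semiring R] [AddCommMonoid α]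
    [Module R α] [StarAddMonoid α] (A : Matrix (ι × κ) (ι × κ) α) :
    partialTrace R Aᴴ = (partialTrace R A)ᴴ := by
  ext
  simp [partialTrace_apply]

theorem partialTrace_kronecker (R : Type*) {α : Type*} [Semiring R] [CommSemiring α] [Module R α]
    (A : Matrix ι ι α) (B : Matrix κ κ α) :
    partialTrace R (A ⊗ₖ B) = B.trace • A := by
  ext
  simp [partialTrace_apply, trace, ← Finset.mul_sum, mul_comm]

theorem partialTrace_surjective (R : Type*) {α : Type*} [Semiring R] [CommSemiring α]
    [Module R α] [Nonempty κ] :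
    Function.Surjective (partialTrace R : Matrix (ι × κ) (ι × κ) α →ₗ[R] Matrix ι ι α) := by
  classical
  intro B
  obtain ⟨k⟩ := ‹Nonempty κ›
  exact ⟨B ⊗ₖ single k k 1, by rw [partialTrace_kronecker, trace_single_eq_same, one_smul]⟩

theorem exists_posDef_partialTrace_eq (R : Type*) {𝕜 : Type*} [RCLike 𝕜] [Semiring R] [Module R 𝕜]
    [Finite ι] [Nonempty κ] {T : Matrix ι ι 𝕜} (hT : T.PosDef) :
    ∃ D : Matrix (ι × κ) (ι × κ) 𝕜, D.PosDef ∧ partialTrace R D = T := by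
  classical
  have hcard : (0 : 𝕜) < Fintype.card κ := by exact_mod_cast Fintype.card_pos
  refine ⟨T ⊗ₖ ((Fintype.card κ : 𝕜)⁻¹ • 1),
    hT.kronecker (PosDef.one.smul (RCLike.inv_pos_of_pos hcard)), ?_⟩
  rw [partialTrace_kronecker, trace_smul, trace_one, smul_eq_mul, inv_mul_cancel₀ hcard.ne',
    one_smul]

end PartialTrace

theorem Cset_eq_setOf_partialTrace_eq_one (n : ℕ) :
    Cset n = {A | A.PosSemidef ∧ partialTrace ℝ A = 1} := by
  simp only [Cset, partialTrace_eq_one_iff]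

open scoped MatrixOrder Matrix.Norms.L2Operator in
theorem affineSpan_Cset_general {ι κ : Type*} [Fintype ι] [Fintype κ] [Nonempty κ]
    {T : Matrix ι ι ℂ} (hT : T.PosDef) :
    (affineSpan ℝ {A : Matrix (ι × κ) (ι × κ) ℂ | A.PosSemidef ∧ partialTrace ℝ A = T} :
        Set (Matrix (ι × κ) (ι × κ) ℂ)) =
      {A | A.IsHermitian ∧ partialTrace ℝ A = T} ∧
    Module.finrank ℝ
        ↥(vectorSpan ℝ {A : Matrix (ι × κ) (ι × κ) ℂ | A.PosSemidef ∧ partialTrace ℝ A = T}) =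
      (Fintype.card ι * Fintype.card κ) ^ 2 - Fintype.card ι ^ 2 := by
  classical
  obtain ⟨D, hD, rfl⟩ := exists_posDef_partialTrace_eq (κ := κ) ℝ hT
  have hnonneg :
      {A : Matrix (ι × κ) (ι × κ) ℂ | A.PosSemidef ∧ partialTrace ℝ A = partialTrace ℝ D} =
        {A | 0 ≤ A ∧ partialTrace ℝ A = partialTrace ℝ D} := by
    simp only [nonneg_iff_posSemidef]
  rw [hnonneg]
  refine ⟨coe_affineSpan_setOf_nonneg_and_map_eq _ hD.isStrictlyPositive, ?_⟩
  rw [vectorSpan_setOf_nonneg_and_map_eq _ hD.isStrictlyPositive,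
    finrank_selfAdjoint_submodule_inf_ker (partialTrace_conjTranspose ℝ)
      (partialTrace_surjective ℝ)]
  simp [Module.finrank_matrix, sq]

/-- The affine hull of `C_n` is the affine subspace `W_n` of Hermitian matrices whose
blocks satisfy the trace conditions, and it has real dimension `n⁴ - n²`. -/
theorem affineSpan_Cset (n : ℕ) (hn : 0 < n) :
    (affineSpan ℝ (Cset n) : Set (Matrix (Fin n × Fin n) (Fin n × Fin n) ℂ)) =
      {A | A.IsHermitian ∧
        ∀ i j : Fin n, ∑ k : Fin n, A (i, k) (j, k) = if i = j then 1 else 0} ∧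
    Module.finrank ℝ ↥(vectorSpan ℝ (Cset n)) = n ^ 4 - n ^ 2 := by
  have : Nonempty (Fin n) := Fin.pos_iff_nonempty.1 hn
  rw [Cset_eq_setOf_partialTrace_eq_one, show n ^ 4 = (n * n) ^ 2 by ring]
  simpa [← partialTrace_eq_one_iff ℝ] using
    affineSpan_Cset_general (κ := Fin n) (PosDef.one (n := Fin n) (R := ℂ))
end
end
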